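/- Convergence to a stationary point without VGD: suppose f⋆ := min_{x∈X} f(x) > −∞ and: (i) each local regularizer R_x is 1-strongly convex with an L-Lipschitz gradient w.r.t. ‖·‖_x; (ii) max_{u,v∈X} ‖u − v‖_x ≤ D and ‖∇f(x)‖_x* ≤ M for all x ∈ X; (iii) f is β-locally smooth w.r.t. x ↦ ‖·‖_x. Run the exact Bregman proximal point method with η = 1/(2β): x_{k+1} := argmin_{y∈X} { ⟨∇f(x_k), y⟩ + (1/η) B_{R_{x_k}}(y, x_k) } for k = 1,…,K. Then there exists k⋆ ∈ {1,…,K} such that for every y ∈ X: ⟨∇f(x_{k⋆}), y − x_{k⋆}⟩ ≥ − 2 (D + ηM) L √(β (f(x₁) − f⋆)) / √K. -/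

import Mathlib

open scoped BigOperators

noncomputable section

/-- Standard inner product on `ℝ^d`. -/
def dotd {d : ℕ} (u v : Fin d → ℝ) : ℝ := ∑ i, u i * v i

/-- `N` is a norm on `ℝ^d`. -/
def IsNorm {d : ℕ} (N : (Fin d → ℝ) → ℝ) : Prop :=
  (∀ x, 0 ≤ N x) ∧ (∀ x, N x = 0 ↔ x = 0) ∧
    (∀ (c : ℝ) (x : Fin d → ℝ), N (c • x) = |c| * N x) ∧ ∀ x y, N (x + y) ≤ N x + N y

/-- The dual norm of `N`. -/
def dualNorm {d : ℕ} (N : (Fin d → ℝ) → ℝ) (z : Fin d → ℝ) : ℝ :=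
  sSup ((fun u => dotd z u) '' {u | N u ≤ 1})

/-- Bregman divergence of `h` whose gradient is `gh`. -/
def breg {d : ℕ} (h : (Fin d → ℝ) → ℝ) (gh : (Fin d → ℝ) → Fin d → ℝ)
    (u v : Fin d → ℝ) : ℝ :=
  h u - h v - dotd (gh v) (u - v)

/-- Bregman gradient mapping `G_η(x, x⁺; h) = (1/η)(∇h(x) − ∇h(x⁺))`. -/
def Gmap {d : ℕ} (gh : (Fin d → ℝ) → Fin d → ℝ) (η : ℝ) (x xp : Fin d → ℝ) :
    Fin d → ℝ :=
  (1 / η) • (gh x - gh xp)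

/-- The set `T_η^{εopt}(x; h)` of `εopt`-approximate Bregman proximal updates at `x`,
for gradient estimate `g = ĝ(x)`. -/
def proxSet {d : ℕ} (X : Set (Fin d → ℝ)) (g : Fin d → ℝ)
    (gh : (Fin d → ℝ) → Fin d → ℝ) (η εopt : ℝ) (x : Fin d → ℝ) :
    Set (Fin d → ℝ) :=
  {xp | xp ∈ X ∧ ∀ z ∈ X, dotd (g + (1 / η) • (gh xp - gh x)) (z - xp) ≥ -εopt}

theorem aux_bound {E : Type*} [NormedAddCommGroup E] [NormedSpace ℝ E] [FiniteDimensional ℝ E]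
    (φ : E →ₗ[ℝ] ℝ) : ∃ C : ℝ, ∀ u, φ u ≤ C * ‖u‖ := by
  refine ⟨‖LinearMap.toContinuousLinearMap φ‖, fun u => ?_⟩
  have := (LinearMap.toContinuousLinearMap φ).le_opNorm u
  exact (le_abs_self _).trans this

theorem aux_bound2 {E : Type*} [AddCommGroup E] [Module ℝ E] [FiniteDimensional ℝ E]
    (N : E → ℝ) (h0 : ∀ x, 0 ≤ N x) (h1 : ∀ x, N x = 0 ↔ x = 0)
    (h2 : ∀ (c : ℝ) (x : E), N (c • x) = |c| * N x) (h3 : ∀ x y, N (x + y) ≤ N x + N y)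
    (φ : E →ₗ[ℝ] ℝ) : ∃ C : ℝ, ∀ u, φ u ≤ C * N u := by
  letI : Norm E := ⟨N⟩
  have core : NormedSpace.Core ℝ E :=
    { norm_nonneg := h0
      norm_smul := h2
      norm_triangle := h3
      norm_eq_zero_iff := h1 }
  letI : NormedAddCommGroup E := NormedAddCommGroup.ofCore core
  letI : NormedSpace ℝ E := NormedSpace.ofCore core
  exact aux_bound φ

def dotL {d : ℕ} (z : Fin d → ℝ) : (Fin d → ℝ) →ₗ[ℝ] ℝ where
  toFun u := dotd z u
  map_add' u v := by simp [dotd, mul_add, Finset.sum_add_distrib]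
  map_smul' c u := by
    simp only [dotd, Pi.smul_apply, smul_eq_mul, RingHom.id_apply, Finset.mul_sum]
    exact Finset.sum_congr rfl fun i _ => by ring

theorem dot_sub_r {d : ℕ} (z u v : Fin d → ℝ) : dotd z (u - v) = dotd z u - dotd z v :=
  (dotL z).map_sub u v

theorem dot_smul_r {d : ℕ} (z : Fin d → ℝ) (c : ℝ) (u : Fin d → ℝ) :
    dotd z (c • u) = c * dotd z u := (dotL z).map_smul c u

theorem dot_zero_r {d : ℕ} (z : Fin d → ℝ) : dotd z 0 = 0 := (dotL z).map_zero

theorem dot_sub_l {d : ℕ} (u v z : Fin d → ℝ) : dotd (u - v) z = dotd u z - dotd v z := by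
  simp [dotd, sub_mul, Finset.sum_sub_distrib]

theorem aux_bdd {d : ℕ} {N : (Fin d → ℝ) → ℝ} (h : IsNorm N) (z : Fin d → ℝ) :
    BddAbove ((fun u => dotd z u) '' {u | N u ≤ 1}) := by
  obtain ⟨h0, h1, h2, h3⟩ := h
  obtain ⟨C, hC⟩ := aux_bound2 N h0 h1 h2 h3 (dotL z)
  refine ⟨|C|, ?_⟩
  rintro _ ⟨u, hu, rfl⟩
  have a : dotd z u ≤ C * N u := hC u
  have hu : N u ≤ 1 := hu
  have b := h0 u
  have c := le_abs_self C
  have e := abs_nonneg C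
  show dotd z u ≤ |C|
  nlinarith

theorem dual_nonneg {d : ℕ} {N : (Fin d → ℝ) → ℝ} (h : IsNorm N) (z : Fin d → ℝ) :
    0 ≤ dualNorm N z := by
  refine le_csSup (aux_bdd h z) ⟨0, ?_, dot_zero_r z⟩
  have : N 0 = 0 := (h.2.1 0).2 rfl
  show N 0 ≤ 1
  linarith

theorem dot_le {d : ℕ} {N : (Fin d → ℝ) → ℝ} (h : IsNorm N) (z u : Fin d → ℝ) :
    dotd z u ≤ dualNorm N z * N u := by
  by_cases hu : u = 0
  · rw [hu, dot_zero_r, (h.2.1 0).2 rfl, mul_zero]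
  have hp : 0 < N u := lt_of_le_of_ne (h.1 u) fun e => hu ((h.2.1 u).1 e.symm)
  have : dotd z ((N u)⁻¹ • u) ≤ dualNorm N z := by
    refine le_csSup (aux_bdd h z) ⟨_, ?_, rfl⟩
    show N _ ≤ 1
    rw [h.2.2.1, abs_of_pos (inv_pos.2 hp), inv_mul_cancel₀ hp.ne']
  rw [dot_smul_r, inv_mul_le_iff₀ hp] at this
  linarith

theorem norm_sub_symm {d : ℕ} {N : (Fin d → ℝ) → ℝ} (h : IsNorm N) (u v : Fin d → ℝ) :
    N (u - v) = N (v - u) := by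
  have := h.2.2.1 (-1) (v - u)
  simpa using this

theorem strong_mono {d : ℕ} {N : (Fin d → ℝ) → ℝ} (h : IsNorm N) {r : (Fin d → ℝ) → ℝ}
    {gr : (Fin d → ℝ) → Fin d → ℝ}
    (hsc : ∀ u v, breg r gr u v ≥ (1 / 2) * (N (u - v)) ^ 2) (u v : Fin d → ℝ) :
    N (u - v) ^ 2 ≤ dotd (gr u - gr v) (u - v) := by
  have a := hsc u v
  have b := hsc v u
  rw [norm_sub_symm h v u] at b
  simp only [breg, dot_sub_r] at a b
  simp only [dot_sub_l, dot_sub_r]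
  linarith

theorem first_order {d : ℕ} {X : Set (Fin d → ℝ)} (hX : Convex ℝ X)
    {N : (Fin d → ℝ) → ℝ} (h : IsNorm N) {r : (Fin d → ℝ) → ℝ}
    {gr : (Fin d → ℝ) → Fin d → ℝ} {L c : ℝ} (hc : 0 ≤ c) (hL : 0 ≤ L)
    (hsc : ∀ u v, breg r gr u v ≥ (1 / 2) * (N (u - v)) ^ 2)
    (hLip : ∀ u v, dualNorm N (gr u - gr v) ≤ L * N (u - v))
    {g x xp y : Fin d → ℝ} (hxp : xp ∈ X) (hy : y ∈ X)
    (hmin : ∀ z ∈ X, dotd g xp + c * breg r gr xp x ≤ dotd g z + c * breg r gr z x) :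
    0 ≤ dotd g (y - xp) + c * dotd (gr xp - gr x) (y - xp) := by
  set A := dotd g (y - xp) + c * dotd (gr xp - gr x) (y - xp) with hA
  set C := c * (L * N (y - xp) ^ 2) with hC
  have hC0 : 0 ≤ C := by positivity
  have key : ∀ t : ℝ, 0 < t → t ≤ 1 → 0 ≤ A + C * t := by
    intro t ht ht1
    set z := xp + t • (y - xp) with hz
    have hzX : z ∈ X := hX.add_smul_sub_mem hxp hy ⟨ht.le, ht1⟩
    have e : z - xp = t • (y - xp) := by simp [hz]
    have m := hmin z hzX
    have b := hsc xp z
    have b' : r z - r xp ≤ dotd (gr z) (z - xp) := by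
      have : breg r gr xp z ≥ 0 := le_trans (by positivity) b
      simp only [breg, dot_sub_r] at this ⊢
      linarith
    have q : dotd (gr z - gr xp) (y - xp) ≤ L * (t * N (y - xp)) * N (y - xp) := by
      refine (dot_le h _ _).trans (mul_le_mul_of_nonneg_right ?_ (h.1 _))
      have := hLip z xp
      rwa [e, h.2.2.1, abs_of_pos ht] at this
    have m2 : 0 ≤ dotd g (z - xp) + c * (r z - r xp - dotd (gr x) (z - xp)) := by
      simp only [breg, dot_sub_r] at m ⊢
      linarith
    have m3 : c * (r z - r xp - dotd (gr x) (z - xp))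
        ≤ c * (dotd (gr z) (z - xp) - dotd (gr x) (z - xp)) :=
      mul_le_mul_of_nonneg_left (by linarith) hc
    rw [e] at m2 m3
    simp only [dot_smul_r] at m2 m3
    have m4 : 0 ≤ t * (dotd g (y - xp) + c * (dotd (gr z) (y - xp) - dotd (gr x) (y - xp))) := by
      linarith
    have m5 := nonneg_of_mul_nonneg_right m4 ht
    have q2 := mul_le_mul_of_nonneg_left q hc
    rw [dot_sub_l] at q2
    rw [hA, hC, dot_sub_l]
    linarith
  by_contra hneg
  push Not at hneg
  have hp : 0 < -A + C + 1 := by linarith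
  have k := key (-A / (-A + C + 1)) (div_pos (by linarith) hp) ((div_le_one hp).2 (by linarith))
  have : (A + C * (-A / (-A + C + 1))) * (-A + C + 1) = -A ^ 2 + A := by
    field_simp
    ring
  have := mul_nonneg k hp.le
  nlinarith

/-- Theorem: convergence to a stationary point without VGD,
for the exact Bregman proximal point method with local norms. -/
theorem prox_point_stationary_convergence (d : ℕ) (X : Set (Fin d → ℝ))
    (f : (Fin d → ℝ) → ℝ) (gradf : (Fin d → ℝ) → Fin d → ℝ)
    (N : (Fin d → ℝ) → (Fin d → ℝ) → ℝ)
    (R : (Fin d → ℝ) → (Fin d → ℝ) → ℝ)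
    (gradR : (Fin d → ℝ) → (Fin d → ℝ) → Fin d → ℝ)
    (L D Mb beta eta : ℝ) (K : ℕ) (x : ℕ → Fin d → ℝ)
    (hX : Convex ℝ X) (hne : X.Nonempty) (hbdd : BddBelow (f '' X))
    (hN : ∀ y ∈ X, IsNorm (N y))
    -- (i) local regularizers: 1-strong convexity and L-Lipschitz gradient
    (hsc : ∀ y ∈ X, ∀ u v, breg (R y) (gradR y) u v ≥ (1 / 2) * (N y (u - v)) ^ 2)
    (hLip : ∀ y ∈ X, ∀ u v, dualNorm (N y) (gradR y u - gradR y v) ≤ L * N y (u - v))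
    -- (ii) diameter and gradient bounds
    (hD : ∀ y ∈ X, ∀ u ∈ X, ∀ v ∈ X, N y (u - v) ≤ D)
    (hM : ∀ y ∈ X, dualNorm (N y) (gradf y) ≤ Mb)
    -- (iii) β-local smoothness
    (hbeta : 0 < beta)
    (hsmooth : ∀ y ∈ X, ∀ z ∈ X,
      |f z - f y - dotd (gradf y) (z - y)| ≤ beta / 2 * (N y (z - y)) ^ 2)
    (heta : eta = 1 / (2 * beta))
    (hK : 0 < K) (hx1 : x 1 ∈ X)
    -- exact Bregman proximal point steps
    (hstep : ∀ k, 1 ≤ k → k ≤ K →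
      x (k + 1) ∈ X ∧ ∀ y ∈ X,
        dotd (gradf (x k)) (x (k + 1)) +
            (1 / eta) * breg (R (x k)) (gradR (x k)) (x (k + 1)) (x k) ≤
          dotd (gradf (x k)) y + (1 / eta) * breg (R (x k)) (gradR (x k)) y (x k)) :
    ∃ kstar, 1 ≤ kstar ∧ kstar ≤ K ∧ ∀ y ∈ X,
      dotd (gradf (x kstar)) (y - x kstar) ≥
        -(2 * (D + eta * Mb) * L *
            Real.sqrt (beta * (f (x 1) - sInf (f '' X))) / Real.sqrt K) := by
  have hXk : ∀ k, 1 ≤ k → k ≤ K + 1 → x k ∈ X := by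
    intro k h1 h2
    rcases Nat.lt_or_ge 1 k with h | h
    · have := (hstep (k - 1) (by omega) (by omega)).1
      rwa [Nat.sub_add_cancel h1] at this
    · have : k = 1 := by omega
      rwa [this]
  have heta0 : 0 < eta := by rw [heta]; positivity
  have hinv : 1 / eta = 2 * beta := by rw [heta]; simp
  have hbe : 2 * beta * eta = 1 := by rw [heta]; field_simp
  by_cases hsub : ∀ u : Fin d → ℝ, u = 0
  · refine ⟨1, le_refl _, hK, fun y hy => ?_⟩
    have e : f '' X = {f (x 1)} := by
      ext v
      constructor
      · rintro ⟨u, _, rfl⟩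
        rw [hsub u, hsub (x 1)]; rfl
      · rintro rfl
        exact ⟨_, hx1, rfl⟩
    rw [e, hsub (y - x 1), dot_zero_r]
    simp
  push Not at hsub
  obtain ⟨w, hw⟩ := hsub
  have hL : 1 ≤ L := by
    have n := hN _ hx1
    have a := strong_mono n (hsc _ hx1) w 0
    have b := (dot_le n _ _).trans (mul_le_mul_of_nonneg_right (hLip _ hx1 w 0) (n.1 (w - 0)))
    rw [sub_zero] at a b
    have hp : 0 < N (x 1) w := lt_of_le_of_ne (n.1 w) fun e => hw ((n.2.1 w).1 e.symm)
    have hp2 : 0 < N (x 1) w ^ 2 := by positivity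
    by_contra hlt
    push Not at hlt
    nlinarith
  have hfo : ∀ k, 1 ≤ k → k ≤ K → ∀ y ∈ X, 0 ≤ dotd (gradf (x k)) (y - x (k + 1)) +
      2 * beta * dotd (gradR (x k) (x (k + 1)) - gradR (x k) (x k)) (y - x (k + 1)) := by
    intro k h1 h2 y hy
    have hk := hXk k h1 (by omega)
    obtain ⟨s1, s2⟩ := hstep k h1 h2
    rw [hinv] at s2
    exact first_order hX (hN _ hk) (by positivity) (by linarith) (hsc _ hk) (hLip _ hk) s1 hy s2
  have hdesc : ∀ k, 1 ≤ k → k ≤ K →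
      beta * N (x k) (x (k + 1) - x k) ^ 2 ≤ f (x k) - f (x (k + 1)) := by
    intro k h1 h2
    have hk := hXk k h1 (by omega)
    have hk' := hXk (k + 1) (by omega) (by omega)
    have a := hfo k h1 h2 _ hk
    have b := strong_mono (hN _ hk) (hsc _ hk) (x (k + 1)) (x k)
    have c := (abs_le.1 (hsmooth _ hk _ hk')).2
    have b2 := mul_le_mul_of_nonneg_left b hbeta.le
    have p : 0 ≤ beta * N (x k) (x (k + 1) - x k) ^ 2 := by positivity
    simp only [dot_sub_r] at a b2 c
    linarith
  set Δ := f (x 1) - sInf (f '' X) with hΔ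
  have hKr : (0 : ℝ) < K := by exact_mod_cast hK
  obtain ⟨k, hk1, hk2, hkey⟩ : ∃ k, 1 ≤ k ∧ k ≤ K ∧
      beta * N (x k) (x (k + 1) - x k) ^ 2 ≤ Δ / K := by
    by_contra hcon
    push Not at hcon
    have h1 : ∑ i ∈ Finset.range K, Δ / K < ∑ i ∈ Finset.range K, (f (x (i + 1)) - f (x (i + 1 + 1))) := by
      refine Finset.sum_lt_sum_of_nonempty ⟨0, by simpa using hK⟩ fun i hi => ?_
      have hi := Finset.mem_range.1 hi
      exact (hcon (i + 1) (by omega) (by omega)).trans_le (hdesc (i + 1) (by omega) (by omega))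
    rw [Finset.sum_range_sub' (fun i => f (x (i + 1)))] at h1
    simp only [Finset.sum_const, Finset.card_range, nsmul_eq_mul, zero_add] at h1
    rw [mul_div_cancel₀ _ hKr.ne'] at h1
    have := csInf_le hbdd ⟨x (K + 1), hXk (K + 1) (by omega) le_rfl, rfl⟩
    linarith
  refine ⟨k, hk1, hk2, fun y hy => ?_⟩
  have hk := hXk k hk1 (by omega)
  have hk' := hXk (k + 1) (by omega) (by omega)
  have n := hN _ hk
  set n0 := N (x k) (x (k + 1) - x k) with hn0
  have hn0p : 0 ≤ n0 := n.1 _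
  have hMb : 0 ≤ Mb := (dual_nonneg n _).trans (hM _ hk)
  have hD0 : 0 ≤ D := (n.1 _).trans (hD _ hk _ hk _ hk)
  have hS : beta * n0 ≤ Real.sqrt (beta * Δ) / Real.sqrt K := by
    rw [← Real.sqrt_div' _ hKr.le]
    apply Real.le_sqrt_of_sq_le
    have := mul_le_mul_of_nonneg_left hkey hbeta.le
    calc _ = beta * (beta * n0 ^ 2) := by ring
      _ ≤ _ := this
      _ = _ := by ring
  have a := hfo k hk1 hk2 y hy
  have b : dotd (gradR (x k) (x (k + 1)) - gradR (x k) (x k)) (y - x (k + 1)) ≤ L * n0 * D :=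
    (dot_le n _ _).trans (mul_le_mul (hLip _ hk _ _) (hD _ hk _ hy _ hk') (n.1 _)
      (mul_nonneg (by linarith) hn0p))
  have c : dotd (gradf (x k)) (x k - x (k + 1)) ≤ Mb * n0 := by
    refine (dot_le n _ _).trans ?_
    rw [norm_sub_symm n]
    exact mul_le_mul_of_nonneg_right (hM _ hk) hn0p
  have b2 := mul_le_mul_of_nonneg_left b (by positivity : 0 ≤ 2 * beta)
  have c2 : Mb * n0 ≤ L * (Mb * n0) := le_mul_of_one_le_left (by positivity) hL
  have c3 : L * (Mb * n0) = 2 * (eta * Mb) * L * (beta * n0) := by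
    linear_combination (-(L * Mb * n0)) * hbe
  have fin := mul_le_mul_of_nonneg_left hS
    (by positivity : 0 ≤ 2 * (D + eta * Mb) * L)
  rw [mul_div_assoc]
  simp only [dot_sub_r] at a b2 c ⊢
  linarith
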